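/- There exists a constant C > 0 such that for every positive integer N, every positive integer σ dividing N, and every function u that is four times continuously differentiable on a neighbourhood of [0,1]² and vanishes on the boundary of [0,1]², the two-scale interpolant satisfies |||Î_{N,N}u − I_{N,N}u||| ≤ C σ^{−3} ‖∂⁴u/∂x²∂y²‖_{0,Ω}. -/

import Mathlib

open MeasureTheory Finset

noncomputable section

/-- The hat function `ψ_i^N` on the uniform mesh of `[0,1]` with `N` intervals. -/
def hat (N i : ℕ) (x : ℝ) : ℝ :=
  if ((i : ℝ) - 1) / N ≤ x ∧ x ≤ (i : ℝ) / N then N * (x - ((i : ℝ) - 1) / N)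
  else if (i : ℝ) / N ≤ x ∧ x ≤ ((i : ℝ) + 1) / N then N * (((i : ℝ) + 1) / N - x)
  else 0

/-- The nodal piecewise bilinear interpolant `I_{Nx,Ny} u`. -/
def interp (Nx Ny : ℕ) (u : ℝ × ℝ → ℝ) : ℝ × ℝ → ℝ := fun p =>
  ∑ i ∈ range (Nx + 1), ∑ j ∈ range (Ny + 1),
    u ((i : ℝ) / Nx, (j : ℝ) / Ny) * hat Nx i p.1 * hat Ny j p.2

/-- The one-directional interpolant `I_{Nx,0} u` (interpolation in the `x`-direction only). -/
def interpX (Nx : ℕ) (u : ℝ × ℝ → ℝ) : ℝ × ℝ → ℝ := fun p =>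
  ∑ i ∈ range (Nx + 1), u ((i : ℝ) / Nx, p.2) * hat Nx i p.1

/-- The one-directional interpolant `I_{0,Ny} u` (interpolation in the `y`-direction only). -/
def interpY (Ny : ℕ) (u : ℝ × ℝ → ℝ) : ℝ × ℝ → ℝ := fun p =>
  ∑ j ∈ range (Ny + 1), u (p.1, (j : ℝ) / Ny) * hat Ny j p.2

/-- The two-scale interpolant `Î_{N,N} u = I_{N,σ}u + I_{σ,N}u − I_{σ,σ}u`. -/
def twoScale (N σ : ℕ) (u : ℝ × ℝ → ℝ) : ℝ × ℝ → ℝ := fun p =>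
  interp N σ u p + interp σ N u p - interp σ σ u p

/-- The multiscale interpolant
`I^{(k)}_{N,N} u = Σ_{i=0}^{k} I_{N/2^i, N/2^{k−i}}u − Σ_{i=1}^{k} I_{N/2^i, N/2^{k+1−i}}u`. -/
def msInterp (N k : ℕ) (u : ℝ × ℝ → ℝ) : ℝ × ℝ → ℝ := fun p =>
  ∑ i ∈ range (k + 1), interp (N / 2 ^ i) (N / 2 ^ (k - i)) u p
    - ∑ i ∈ Finset.Icc 1 k, interp (N / 2 ^ i) (N / 2 ^ (k + 1 - i)) u p

/-- The closed square `[0,1]²`. -/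
def unitSquare : Set (ℝ × ℝ) := Set.Icc (0 : ℝ) 1 ×ˢ Set.Icc (0 : ℝ) 1

/-- The open square `Ω = (0,1)²`. -/
def Omega2 : Set (ℝ × ℝ) := Set.Ioo (0 : ℝ) 1 ×ˢ Set.Ioo (0 : ℝ) 1

/-- Partial derivative in `x` (defined a.e. for Lipschitz functions; junk value `0` elsewhere). -/
def pderivX (v : ℝ × ℝ → ℝ) : ℝ × ℝ → ℝ := fun p => deriv (fun x => v (x, p.2)) p.1

/-- Partial derivative in `y` (defined a.e. for Lipschitz functions; junk value `0` elsewhere). -/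
def pderivY (v : ℝ × ℝ → ℝ) : ℝ × ℝ → ℝ := fun p => deriv (fun y => v (p.1, y)) p.2

/-- The `L²(Ω)` norm `‖v‖_{0,Ω}`. -/
def L2norm (v : ℝ × ℝ → ℝ) : ℝ := Real.sqrt (∫ p in Omega2, (v p) ^ 2)

/-- The energy norm `|||v||| = (∫_Ω |∇v|² + ∫_Ω v²)^{1/2}`, gradients taken a.e. -/
def energyNorm (v : ℝ × ℝ → ℝ) : ℝ :=
  Real.sqrt (∫ p in Omega2, ((pderivX v p) ^ 2 + (pderivY v p) ^ 2 + (v p) ^ 2))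

/-- `u` is four times continuously differentiable on a neighbourhood of `[0,1]²`. -/
def C4Near (u : ℝ × ℝ → ℝ) : Prop :=
  ∃ U : Set (ℝ × ℝ), IsOpen U ∧ unitSquare ⊆ U ∧ ContDiffOn ℝ 4 u U

/-- `u` vanishes on the boundary of `[0,1]²`. -/
def VanishOnBoundary (u : ℝ × ℝ → ℝ) : Prop :=
  ∀ p ∈ unitSquare, (p.1 = 0 ∨ p.1 = 1 ∨ p.2 = 0 ∨ p.2 = 1) → u p = 0

/-- The seminorm `|u|₂ = ‖u_xx‖_{0,Ω} + ‖u_xy‖_{0,Ω} + ‖u_yy‖_{0,Ω}`. -/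
def semi2 (u : ℝ × ℝ → ℝ) : ℝ :=
  L2norm (pderivX (pderivX u)) + L2norm (pderivX (pderivY u)) + L2norm (pderivY (pderivY u))

/-- The mixed fourth derivative `∂⁴u/∂x²∂y²`. -/
def uxxyy (u : ℝ × ℝ → ℝ) : ℝ × ℝ → ℝ := pderivX (pderivX (pderivY (pderivY u)))

/-- The bilinear form `B(v,w) = ∫_Ω ∇v·∇w + ∫_Ω v w`, gradients taken a.e. -/
def Bform (v w : ℝ × ℝ → ℝ) : ℝ :=
  ∫ p in Omega2, (pderivX v p * pderivX w p + pderivY v p * pderivY w p + v p * w p)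

/-!
Write `I_N` for univariate piecewise linear interpolation. The two-scale error factors as
`Î_{N,N} u - I_{N,N} u = -(I_N - I_σ)_x (I_N - I_σ)_y u`. On a fine interval inside a coarse
interval `K` of length `σ⁻¹`, the value and the slope of `(I_N - I_σ) f` are combinations of point
values of `f` that annihilate affine functions, hence are bounded by `σ⁻¹ ∫_K |f''|` and
`∫_K |f''|`. Applying such functionals in `x` and in `y` bounds the error and its gradient on each
coarse square `Q` by `σ⁻¹ ∫_Q |u_xxyy|`. By Cauchy–Schwarz the square of this is at most
`σ⁻⁴ ∫_Q u_xxyy²`, and integrating over the `Q`, of area `σ⁻²`, yields `σ⁻⁶ ∫_Ω u_xxyy²`.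
-/

open Finsupp (linearCombination single supported)

section SecondDifferences

theorem norm_sub_le_setIntegral_norm_deriv {E : Type*} [NormedAddCommGroup E] [NormedSpace ℝ E]
    [CompleteSpace E] {a b : ℝ} {f f' : ℝ → E} (hf : ∀ x ∈ Set.Icc a b, HasDerivAt f (f' x) x)
    (hf' : ContinuousOn f' (Set.Icc a b)) {x y : ℝ} (hx : x ∈ Set.Icc a b)
    (hy : y ∈ Set.Icc a b) : ‖f x - f y‖ ≤ ∫ t in Set.Ioo a b, ‖f' t‖ := by
  have hsub : Set.uIcc y x ⊆ Set.Icc a b := Set.uIcc_subset_Icc hy hx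
  calc ‖f x - f y‖ = ‖∫ t in y..x, f' t‖ := by
        rw [intervalIntegral.integral_eq_sub_of_hasDerivAt (fun z hz => hf z (hsub hz))
          (hf'.mono hsub).intervalIntegrable]
    _ ≤ ∫ t in Set.uIoc y x, ‖f' t‖ := intervalIntegral.norm_integral_le_integral_norm_uIoc
    _ ≤ ∫ t in Set.Ioc a b, ‖f' t‖ :=
        setIntegral_mono_set (hf'.norm.integrableOn_Icc.mono_set Set.Ioc_subset_Icc_self)
          (Filter.Eventually.of_forall fun _ => norm_nonneg _)
          (Set.Ioc_subset_Ioc (le_min hy.1 hx.1) (max_le hy.2 hx.2)).eventuallyLE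
    _ = ∫ t in Set.Ioo a b, ‖f' t‖ := integral_Ioc_eq_integral_Ioo

theorem exists_slope_eq_deriv {a b c d : ℝ} {f f' : ℝ → ℝ}
    (hf : ∀ x ∈ Set.Icc a b, HasDerivAt f (f' x) x) (hac : a ≤ c) (hcd : c < d) (hdb : d ≤ b) :
    ∃ ξ ∈ Set.Icc a b, slope f c d = f' ξ := by
  have hsub : Set.Icc c d ⊆ Set.Icc a b := Set.Icc_subset_Icc hac hdb
  obtain ⟨ξ, hξ, hslope⟩ := exists_hasDerivAt_eq_slope f f' hcd
    (fun z hz => (hf z (hsub hz)).continuousAt.continuousWithinAt)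
    (fun z hz => hf z (hsub (Set.Ioo_subset_Icc_self hz)))
  exact ⟨ξ, hsub (Set.Ioo_subset_Icc_self hξ), (slope_def_field f c d).trans hslope.symm⟩

theorem abs_slope_sub_slope_le {a b c d : ℝ} {f f' f'' : ℝ → ℝ}
    (hf : ∀ x ∈ Set.Icc a b, HasDerivAt f (f' x) x)
    (hf' : ∀ x ∈ Set.Icc a b, HasDerivAt f' (f'' x) x) (hf'' : ContinuousOn f'' (Set.Icc a b))
    (hac : a ≤ c) (hcd : c < d) (hdb : d ≤ b) :
    |slope f c d - slope f a b| ≤ ∫ t in Set.Ioo a b, |f'' t| := by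
  obtain ⟨ξ, hξ, hcd_eq⟩ := exists_slope_eq_deriv hf hac hcd hdb
  obtain ⟨η, hη, hab_eq⟩ :=
    exists_slope_eq_deriv hf le_rfl ((hac.trans_lt hcd).trans_le hdb) le_rfl
  rw [hcd_eq, hab_eq]
  exact norm_sub_le_setIntegral_norm_deriv hf' hf'' hξ hη

theorem abs_chord_sub_chord_le {a b c d x : ℝ} {f f' f'' : ℝ → ℝ}
    (hf : ∀ x ∈ Set.Icc a b, HasDerivAt f (f' x) x)
    (hf' : ∀ x ∈ Set.Icc a b, HasDerivAt f' (f'' x) x) (hf'' : ContinuousOn f'' (Set.Icc a b))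
    (hac : a ≤ c) (hcd : c < d) (hdb : d ≤ b) (hx : x ∈ Set.Icc c d) :
    |f c + (x - c) * slope f c d - (f a + (x - a) * slope f a b)| ≤
      (b - a) * ∫ t in Set.Ioo a b, |f'' t| := by
  set M := ∫ t in Set.Ioo a b, |f'' t|
  have hM : 0 ≤ M := integral_nonneg fun _ => abs_nonneg _
  have hsplit : f c + (x - c) * slope f c d - (f a + (x - a) * slope f a b) =
      (c - a) * (slope f a c - slope f a b) + (x - c) * (slope f c d - slope f a b) := by
    have hfc : (c - a) * slope f a c = f c - f a := sub_smul_slope f a c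
    linear_combination -hfc
  have hleft : |(c - a) * (slope f a c - slope f a b)| ≤ (c - a) * M := by
    rcases hac.eq_or_lt with rfl | hac'
    · simp
    · rw [abs_mul, abs_of_pos (sub_pos.2 hac')]
      exact mul_le_mul_of_nonneg_left
        (abs_slope_sub_slope_le hf hf' hf'' le_rfl hac' (hcd.le.trans hdb)) (sub_nonneg.2 hac)
  have hright : |(x - c) * (slope f c d - slope f a b)| ≤ (x - c) * M := by
    rw [abs_mul, abs_of_nonneg (sub_nonneg.2 hx.1)]
    exact mul_le_mul_of_nonneg_left (abs_slope_sub_slope_le hf hf' hf'' hac hcd hdb)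
      (sub_nonneg.2 hx.1)
  calc |f c + (x - c) * slope f c d - (f a + (x - a) * slope f a b)|
      ≤ (c - a) * M + (x - c) * M := hsplit ▸ (abs_add_le _ _).trans (add_le_add hleft hright)
    _ = (x - a) * M := by ring
    _ ≤ (b - a) * M := mul_le_mul_of_nonneg_right (sub_le_sub_right (hx.2.trans hdb) a) hM

end SecondDifferences

section Functionals

/-- The functional `f ↦ slope f a b`. A finitely supported `Λ : ℝ →₀ ℝ` encodes the combination
`f ↦ linearCombination ℝ f Λ` of point evaluations. -/
def slopeFunctional (a b : ℝ) : ℝ →₀ ℝ :=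
  single b (b - a)⁻¹ - single a (b - a)⁻¹

/-- The functional sending `f` to the value at `x` of its affine interpolant with nodes `a` and `b`,
written as `f a + (x - a) * slope f a b`. -/
def chordFunctional (a b x : ℝ) : ℝ →₀ ℝ :=
  single a 1 + (x - a) • slopeFunctional a b

theorem linearCombination_slopeFunctional (f : ℝ → ℝ) (a b : ℝ) :
    linearCombination ℝ f (slopeFunctional a b) = slope f a b := by
  simp only [slopeFunctional, map_sub, Finsupp.linearCombination_single, slope, smul_eq_mul,
    vsub_eq_sub, mul_sub]

theorem linearCombination_chordFunctional (f : ℝ → ℝ) (a b x : ℝ) :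
    linearCombination ℝ f (chordFunctional a b x) = f a + (x - a) * slope f a b := by
  simp only [chordFunctional, map_add, map_smul, Finsupp.linearCombination_single,
    linearCombination_slopeFunctional, smul_eq_mul, one_mul]

theorem slopeFunctional_mem_supported {s : Set ℝ} {a b : ℝ} (ha : a ∈ s) (hb : b ∈ s) :
    slopeFunctional a b ∈ supported ℝ ℝ s :=
  sub_mem (Finsupp.single_mem_supported ℝ _ hb) (Finsupp.single_mem_supported ℝ _ ha)

theorem chordFunctional_mem_supported {s : Set ℝ} {a b : ℝ} (ha : a ∈ s) (hb : b ∈ s) (x : ℝ) :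
    chordFunctional a b x ∈ supported ℝ ℝ s :=
  add_mem (Finsupp.single_mem_supported ℝ _ ha)
    (Submodule.smul_mem _ _ (slopeFunctional_mem_supported ha hb))

theorem hasDerivAt_linearCombination_chordFunctional (f : ℝ → ℝ) (a b x : ℝ) :
    HasDerivAt (fun z => linearCombination ℝ f (chordFunctional a b z))
      (linearCombination ℝ f (slopeFunctional a b)) x := by
  simp only [linearCombination_chordFunctional, linearCombination_slopeFunctional]
  simpa only [one_mul] using
    (((hasDerivAt_id' x).sub_const a).mul_const (slope f a b)).const_add (f a)

theorem hasDerivAt_linearCombination {ι : Type*} {Λ : ι →₀ ℝ} {g : ℝ → ι → ℝ} {g' : ι → ℝ} {t : ℝ}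
    (hg : ∀ z ∈ Λ.support, HasDerivAt (fun t => g t z) (g' z) t) :
    HasDerivAt (fun t => linearCombination ℝ (g t) Λ) (linearCombination ℝ g' Λ) t :=
  HasDerivAt.fun_sum fun z hz => (hg z hz).const_mul (Λ z)

theorem continuousOn_linearCombination {X ι : Type*} [TopologicalSpace X] {Λ : ι →₀ ℝ}
    {g : X → ι → ℝ} {s : Set X} (hg : ∀ z ∈ Λ.support, ContinuousOn (fun t => g t z) s) :
    ContinuousOn (fun t => linearCombination ℝ (g t) Λ) s :=
  continuousOn_finsetSum _ fun z hz => continuousOn_const.mul (hg z hz)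

/-- `Λ` is a combination of point evaluations on `[a, b]` with `|Λ f| ≤ A ∫_a^b |f''|` for every
`C²` function `f`, as the Peano kernel theorem provides for functionals annihilating the affine
functions. The derivatives of `f` are arguments, to avoid iterated `deriv`. -/
structure PeanoBound (a b A : ℝ) (Λ : ℝ →₀ ℝ) : Prop where
  mem_supported : Λ ∈ supported ℝ ℝ (Set.Icc a b)
  abs_le : ∀ f f' f'' : ℝ → ℝ, (∀ x ∈ Set.Icc a b, HasDerivAt f (f' x) x) →
    (∀ x ∈ Set.Icc a b, HasDerivAt f' (f'' x) x) → ContinuousOn f'' (Set.Icc a b) →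
      |linearCombination ℝ f Λ| ≤ A * ∫ t in Set.Ioo a b, |f'' t|

theorem peanoBound_slopeFunctional_sub {a b c d : ℝ} (hac : a ≤ c) (hcd : c < d) (hdb : d ≤ b) :
    PeanoBound a b 1 (slopeFunctional c d - slopeFunctional a b) where
  mem_supported := by
    have hab : a ≤ b := hac.trans (hcd.le.trans hdb)
    have hc : c ∈ Set.Icc a b := ⟨hac, hcd.le.trans hdb⟩
    have hd : d ∈ Set.Icc a b := ⟨hac.trans hcd.le, hdb⟩
    exact sub_mem (slopeFunctional_mem_supported hc hd)
      (slopeFunctional_mem_supported (Set.left_mem_Icc.2 hab) (Set.right_mem_Icc.2 hab))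
  abs_le f f' f'' hf hf' hf'' := by
    simpa only [map_sub, linearCombination_slopeFunctional, one_mul] using
      abs_slope_sub_slope_le hf hf' hf'' hac hcd hdb

theorem peanoBound_chordFunctional_sub {a b c d x : ℝ} (hac : a ≤ c) (hcd : c < d) (hdb : d ≤ b)
    (hx : x ∈ Set.Icc c d) :
    PeanoBound a b (b - a) (chordFunctional c d x - chordFunctional a b x) where
  mem_supported := by
    have hab : a ≤ b := hac.trans (hcd.le.trans hdb)
    have hc : c ∈ Set.Icc a b := ⟨hac, hcd.le.trans hdb⟩
    have hd : d ∈ Set.Icc a b := ⟨hac.trans hcd.le, hdb⟩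
    exact sub_mem (chordFunctional_mem_supported hc hd x)
      (chordFunctional_mem_supported (Set.left_mem_Icc.2 hab) (Set.right_mem_Icc.2 hab) x)
  abs_le f f' f'' hf hf' hf'' := by
    simpa only [map_sub, linearCombination_chordFunctional] using
      abs_chord_sub_chord_le hf hf' hf'' hac hcd hdb hx

end Functionals

section PartialDerivatives

variable {u : ℝ × ℝ → ℝ} {p : ℝ × ℝ}

theorem hasDerivAt_fst_slice (hu : DifferentiableAt ℝ u p) :
    HasDerivAt (fun x => u (x, p.2)) (fderiv ℝ u p (1, 0)) p.1 :=
  HasFDerivAt.comp_hasDerivAt (f := fun x => (x, p.2)) p.1 hu.hasFDerivAt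
    ((hasDerivAt_id p.1).prodMk (hasDerivAt_const p.1 p.2))

theorem hasDerivAt_snd_slice (hu : DifferentiableAt ℝ u p) :
    HasDerivAt (fun y => u (p.1, y)) (fderiv ℝ u p (0, 1)) p.2 :=
  HasFDerivAt.comp_hasDerivAt (f := fun y => (p.1, y)) p.2 hu.hasFDerivAt
    ((hasDerivAt_const p.2 p.1).prodMk (hasDerivAt_id p.2))

theorem pderivX_eq_fderiv (hu : DifferentiableAt ℝ u p) : pderivX u p = fderiv ℝ u p (1, 0) :=
  (hasDerivAt_fst_slice hu).deriv

theorem pderivY_eq_fderiv (hu : DifferentiableAt ℝ u p) : pderivY u p = fderiv ℝ u p (0, 1) :=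
  (hasDerivAt_snd_slice hu).deriv

theorem hasDerivAt_pderivX (hu : DifferentiableAt ℝ u p) :
    HasDerivAt (fun x => u (x, p.2)) (pderivX u p) p.1 :=
  pderivX_eq_fderiv hu ▸ hasDerivAt_fst_slice hu

theorem hasDerivAt_pderivY (hu : DifferentiableAt ℝ u p) :
    HasDerivAt (fun y => u (p.1, y)) (pderivY u p) p.2 :=
  pderivY_eq_fderiv hu ▸ hasDerivAt_snd_slice hu

theorem eventually_differentiableAt_of_contDiffAt {n : WithTop ℕ∞} (hn : 1 ≤ n)
    (hu : ContDiffAt ℝ n u p) : ∀ᶠ q in nhds p, DifferentiableAt ℝ u q :=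
  ((hu.of_le hn).eventually (by simp)).mono fun _ hq => hq.differentiableAt one_ne_zero

theorem contDiffAt_pderivX {n : WithTop ℕ∞} (hu : ContDiffAt ℝ (n + 1) u p) :
    ContDiffAt ℝ n (pderivX u) p :=
  (hu.fderiv_right_succ.clm_apply contDiffAt_const).congr_of_eventuallyEq <|
    (eventually_differentiableAt_of_contDiffAt le_add_self hu).mono fun _ => pderivX_eq_fderiv

theorem contDiffAt_pderivY {n : WithTop ℕ∞} (hu : ContDiffAt ℝ (n + 1) u p) :
    ContDiffAt ℝ n (pderivY u) p :=
  (hu.fderiv_right_succ.clm_apply contDiffAt_const).congr_of_eventuallyEq <|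
    (eventually_differentiableAt_of_contDiffAt le_add_self hu).mono fun _ => pderivY_eq_fderiv

theorem contDiffAt_pderivY_pderivY (hu : ContDiffAt ℝ 4 u p) :
    ContDiffAt ℝ 2 (pderivY (pderivY u)) p :=
  contDiffAt_pderivY (contDiffAt_pderivY (hu.of_le (by norm_num)))

theorem continuousAt_uxxyy (hu : ContDiffAt ℝ 4 u p) : ContinuousAt (uxxyy u) p :=
  (contDiffAt_pderivX (n := 0) (contDiffAt_pderivX
    ((contDiffAt_pderivY_pderivY hu).of_le (by norm_num)))).continuousAt

end PartialDerivatives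

section Integrals

theorem integrableOn_Ioo_prod_of_continuousOn {a b c d : ℝ} {g : ℝ × ℝ → ℝ}
    (hg : ContinuousOn g (Set.Icc a b ×ˢ Set.Icc c d)) :
    IntegrableOn g (Set.Ioo a b ×ˢ Set.Ioo c d) :=
  (hg.integrableOn_compact (isCompact_Icc.prod isCompact_Icc)).mono_set
    (Set.prod_mono Set.Ioo_subset_Icc_self Set.Ioo_subset_Icc_self)

theorem setIntegral_abs_le_of_abs_le_slice {X Y : Type*} [MeasurableSpace X] [MeasurableSpace Y]
    {μ : Measure X} {ν : Measure Y} [SFinite μ] [SFinite ν] {s : Set X} {t : Set Y}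
    (ht : MeasurableSet t) {g : X × Y → ℝ} (hg : IntegrableOn g (s ×ˢ t) (μ.prod ν)) {φ : Y → ℝ}
    {K : ℝ} (hφ : ∀ y ∈ t, |φ y| ≤ K * ∫ x in s, g (x, y) ∂μ) :
    ∫ y in t, |φ y| ∂ν ≤ K * ∫ p in s ×ˢ t, g p ∂μ.prod ν := by
  have hg' : Integrable g ((μ.restrict s).prod (ν.restrict t)) := by
    rwa [Measure.prod_restrict]
  calc ∫ y in t, |φ y| ∂ν ≤ ∫ y in t, K * ∫ x in s, g (x, y) ∂μ ∂ν :=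
        integral_mono_of_nonneg (Filter.Eventually.of_forall fun _ => abs_nonneg _)
          (hg'.integral_prod_right.const_mul K) ((ae_restrict_mem ht).mono hφ)
    _ = K * ∫ p in s ×ˢ t, g p ∂μ.prod ν := by
        rw [integral_const_mul, ← Measure.prod_restrict, integral_prod_symm _ hg']

theorem sq_setIntegral_le_measureReal_mul {X : Type*} [MeasurableSpace X] {μ : Measure X}
    {s : Set X} {g : X → ℝ} (hs : μ s ≠ ⊤) (hg : IntegrableOn g s μ)
    (hg2 : IntegrableOn (fun x => g x ^ 2) s μ) :
    (∫ x in s, g x ∂μ) ^ 2 ≤ μ.real s * ∫ x in s, g x ^ 2 ∂μ := by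
  rcases eq_or_ne (μ s) 0 with h0 | h0
  · simp [Measure.restrict_eq_zero.2 h0]
  have hpos : 0 < μ.real s := ENNReal.toReal_pos h0 hs
  have hjensen : (⨍ x in s, g x ∂μ) ^ 2 ≤ ⨍ x in s, g x ^ 2 ∂μ :=
    (even_two.convexOn_pow).map_set_average_le (by fun_prop) isClosed_univ h0 hs
      (Filter.Eventually.of_forall fun _ => Set.mem_univ _) hg hg2
  simp only [setAverage_eq, smul_eq_mul] at hjensen
  calc (∫ x in s, g x ∂μ) ^ 2
      = μ.real s ^ 2 * ((μ.real s)⁻¹ * ∫ x in s, g x ∂μ) ^ 2 := by field_simp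
    _ ≤ μ.real s ^ 2 * ((μ.real s)⁻¹ * ∫ x in s, g x ^ 2 ∂μ) := by gcongr
    _ = μ.real s * ∫ x in s, g x ^ 2 ∂μ := by field_simp

theorem integral_le_sum_mul_measureReal {X ι : Type*} [MeasurableSpace X] {μ : Measure X}
    {s : Finset ι} {t : ι → Set X} {c : ι → ℝ} {F : X → ℝ} (ht : ∀ i ∈ s, MeasurableSet (t i))
    (ht_fin : ∀ i ∈ s, μ (t i) ≠ ⊤) (hc : ∀ i ∈ s, 0 ≤ c i)
    (hF : ∀ᵐ x ∂μ, ∃ i ∈ s, x ∈ t i ∧ F x ≤ c i) : ∫ x, F x ∂μ ≤ ∑ i ∈ s, c i * μ.real (t i) := by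
  by_cases hFint : Integrable F μ
  swap
  · rw [integral_undef hFint]
    exact Finset.sum_nonneg fun i hi => mul_nonneg (hc i hi) measureReal_nonneg
  have hind : ∀ i ∈ s, Integrable ((t i).indicator fun _ => c i) μ := fun i hi =>
    (integrable_indicator_iff (ht i hi)).2 (integrableOn_const (ht_fin i hi))
  calc ∫ x, F x ∂μ ≤ ∫ x, ∑ i ∈ s, (t i).indicator (fun _ => c i) x ∂μ := by
        refine integral_mono_ae hFint (integrable_finsetSum _ hind) (hF.mono fun x => ?_)
        rintro ⟨i, hi, hxi, hle⟩
        have hsingle := Finset.single_le_sum (f := fun j => (t j).indicator (fun _ => c j) x)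
          (fun j hj => Set.indicator_nonneg (fun _ _ => hc j hj) x) hi
        simp only [Set.indicator_of_mem hxi] at hsingle
        exact hle.trans hsingle
    _ = ∑ i ∈ s, c i * μ.real (t i) := by
        rw [integral_finsetSum _ hind]
        refine Finset.sum_congr rfl fun i hi => ?_
        rw [integral_indicator_const _ (ht i hi), smul_eq_mul, mul_comm]

theorem sum_setIntegral_le_setIntegral {X ι : Type*} [MeasurableSpace X] {μ : Measure X}
    {s : Finset ι} {t : ι → Set X} {Ω : Set X} {g : X → ℝ} (ht : ∀ i ∈ s, MeasurableSet (t i))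
    (hdisj : Set.Pairwise (↑s) (Function.onFun Disjoint t)) (hsub : ∀ i ∈ s, t i ⊆ Ω)
    (hg : IntegrableOn g Ω μ) (hg_nonneg : 0 ≤ᵐ[μ.restrict Ω] g) :
    ∑ i ∈ s, ∫ x in t i, g x ∂μ ≤ ∫ x in Ω, g x ∂μ := by
  rw [← integral_biUnion_finset _ ht hdisj fun i hi => hg.mono_set (hsub i hi)]
  exact setIntegral_mono_set hg hg_nonneg (Set.iUnion₂_subset hsub).eventuallyLE

end Integrals

section TensorProducts

/-- The tensor product of the functionals `Λ` (in the first variable) and `M` (in the second),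
evaluated at `u`. -/
def tensorPairing (u : ℝ × ℝ → ℝ) (Λ M : ℝ →₀ ℝ) : ℝ :=
  linearCombination ℝ (fun s => linearCombination ℝ (fun t => u (s, t)) M) Λ

theorem tensorPairing_eq_swap (u : ℝ × ℝ → ℝ) (Λ M : ℝ →₀ ℝ) :
    tensorPairing u Λ M =
      linearCombination ℝ (fun t => linearCombination ℝ (fun s => u (s, t)) Λ) M := by
  simp only [tensorPairing, Finsupp.linearCombination_apply, Finsupp.sum, smul_eq_mul,
    Finset.mul_sum]
  rw [Finset.sum_comm]
  exact Finset.sum_congr rfl fun _ _ => Finset.sum_congr rfl fun _ _ => mul_left_comm _ _ _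

variable {u : ℝ × ℝ → ℝ} {a b c d A B : ℝ} {Λ M : ℝ →₀ ℝ}

theorem PeanoBound.abs_apply_pderivY_pderivY_le (hΛ : PeanoBound a b A Λ) {t : ℝ}
    (hu : ∀ s ∈ Set.Icc a b, ContDiffAt ℝ 4 u (s, t)) :
    |linearCombination ℝ (fun s => pderivY (pderivY u) (s, t)) Λ| ≤
      A * ∫ s in Set.Ioo a b, |uxxyy u (s, t)| := by
  have huyy : ∀ s ∈ Set.Icc a b, ContDiffAt ℝ 2 (pderivY (pderivY u)) (s, t) :=
    fun s hs => contDiffAt_pderivY_pderivY (hu s hs)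
  have huxyy : ∀ s ∈ Set.Icc a b, ContDiffAt ℝ 1 (pderivX (pderivY (pderivY u))) (s, t) :=
    fun s hs => contDiffAt_pderivX ((huyy s hs).of_le (by norm_num))
  refine hΛ.abs_le _ (fun s => pderivX (pderivY (pderivY u)) (s, t)) _ (fun s hs => ?_)
    (fun s hs => ?_) fun s hs => ?_
  · exact hasDerivAt_pderivX ((huyy s hs).differentiableAt two_ne_zero)
  · exact hasDerivAt_pderivX ((huxyy s hs).differentiableAt one_ne_zero)
  · exact ((continuousAt_uxxyy (hu s hs)).comp (f := fun s => (s, t))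
      (by fun_prop)).continuousWithinAt

/-- Since `Λ` and `M` only involve point values, `M` may be applied to `t ↦ Λ (u (·, t))`, whose
second derivative is `Λ (u_yy (·, t))`; no symmetry of mixed derivatives is needed. -/
theorem PeanoBound.abs_tensorPairing_le (hΛ : PeanoBound a b A Λ) (hM : PeanoBound c d B M)
    (hB : 0 ≤ B) (hu : ∀ p ∈ Set.Icc a b ×ˢ Set.Icc c d, ContDiffAt ℝ 4 u p) :
    |tensorPairing u Λ M| ≤ A * B * ∫ p in Set.Ioo a b ×ˢ Set.Ioo c d, |uxxyy u p| := by
  have hnode : ∀ z ∈ Λ.support, ∀ t ∈ Set.Icc c d, ContDiffAt ℝ 4 u (z, t) := fun z hz t ht =>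
    hu (z, t) ⟨(Finsupp.mem_supported ℝ Λ).1 hΛ.mem_supported hz, ht⟩
  have hM_apply : |tensorPairing u Λ M| ≤
      B * ∫ t in Set.Ioo c d, |linearCombination ℝ (fun s => pderivY (pderivY u) (s, t)) Λ| := by
    rw [tensorPairing_eq_swap]
    refine hM.abs_le _ (fun t => linearCombination ℝ (fun s => pderivY u (s, t)) Λ) _
      (fun t ht => ?_) (fun t ht => ?_) ?_
    · exact hasDerivAt_linearCombination fun z hz =>
        hasDerivAt_pderivY ((hnode z hz t ht).differentiableAt four_ne_zero)
    · exact hasDerivAt_linearCombination fun z hz =>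
        hasDerivAt_pderivY ((contDiffAt_pderivY (n := 3)
          ((hnode z hz t ht).of_le (by norm_num))).differentiableAt three_ne_zero)
    · exact continuousOn_linearCombination fun z hz t ht =>
        ((contDiffAt_pderivY_pderivY (hnode z hz t ht)).continuousAt.comp
          (f := fun t => (z, t)) (by fun_prop)).continuousWithinAt
  have hcont : ContinuousOn (uxxyy u) (Set.Icc a b ×ˢ Set.Icc c d) := fun p hp =>
    (continuousAt_uxxyy (hu p hp)).continuousWithinAt
  have hΛ_apply : ∫ t in Set.Ioo c d, |linearCombination ℝ (fun s => pderivY (pderivY u) (s, t)) Λ|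
      ≤ A * ∫ p in Set.Ioo a b ×ˢ Set.Ioo c d, |uxxyy u p| :=
    setIntegral_abs_le_of_abs_le_slice measurableSet_Ioo
      (integrableOn_Ioo_prod_of_continuousOn hcont.abs) fun t ht =>
        hΛ.abs_apply_pderivY_pderivY_le fun s hs => hu (s, t) ⟨hs, Set.Ioo_subset_Icc_self ht⟩
  calc |tensorPairing u Λ M| ≤ B * (A * ∫ p in Set.Ioo a b ×ˢ Set.Ioo c d, |uxxyy u p|) :=
        hM_apply.trans (mul_le_mul_of_nonneg_left hΛ_apply hB)
    _ = A * B * ∫ p in Set.Ioo a b ×ˢ Set.Ioo c d, |uxxyy u p| := by ring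

theorem PeanoBound.sq_tensorPairing_le (hΛ : PeanoBound a b A Λ) (hM : PeanoBound c d B M)
    (hB : 0 ≤ B) (hab : a ≤ b) (hcd : c ≤ d)
    (hu : ∀ p ∈ Set.Icc a b ×ˢ Set.Icc c d, ContDiffAt ℝ 4 u p) :
    tensorPairing u Λ M ^ 2 ≤ (A * B) ^ 2 * ((b - a) * (d - c) *
      ∫ p in Set.Ioo a b ×ˢ Set.Ioo c d, uxxyy u p ^ 2) := by
  set R := Set.Ioo a b ×ˢ Set.Ioo c d
  have hcont : ContinuousOn (uxxyy u) (Set.Icc a b ×ˢ Set.Icc c d) := fun p hp =>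
    (continuousAt_uxxyy (hu p hp)).continuousWithinAt
  have hvol : volume.real R = (b - a) * (d - c) := by
    rw [Measure.volume_eq_prod, measureReal_prod_prod, Real.volume_real_Ioo_of_le hab,
      Real.volume_real_Ioo_of_le hcd]
  have hfin : volume R ≠ ⊤ :=
    ((Metric.isBounded_Ioo a b).prod (Metric.isBounded_Ioo c d)).measure_lt_top.ne
  calc tensorPairing u Λ M ^ 2 ≤ (A * B * ∫ p in R, |uxxyy u p|) ^ 2 := by
        rw [← sq_abs]
        gcongr
        exact hΛ.abs_tensorPairing_le hM hB hu
    _ = (A * B) ^ 2 * (∫ p in R, |uxxyy u p|) ^ 2 := mul_pow _ _ _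
    _ ≤ (A * B) ^ 2 * (volume.real R * ∫ p in R, |uxxyy u p| ^ 2) := by
        gcongr
        refine sq_setIntegral_le_measureReal_mul hfin
          (integrableOn_Ioo_prod_of_continuousOn hcont.abs)
          (integrableOn_Ioo_prod_of_continuousOn (hcont.abs.pow 2))
    _ = (A * B) ^ 2 * ((b - a) * (d - c) * ∫ p in R, uxxyy u p ^ 2) := by
        simp only [sq_abs, hvol]

end TensorProducts

section Mesh

/-- The piecewise linear interpolant of a function of one variable on the uniform mesh with `N`
intervals. -/
def linInterp (N : ℕ) (f : ℝ → ℝ) (x : ℝ) : ℝ :=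
  ∑ i ∈ range (N + 1), f ((i : ℝ) / N) * hat N i x

/-- The difference between the fine and the coarse piecewise linear interpolants. -/
def linInterpDiff (N σ : ℕ) (f : ℝ → ℝ) (x : ℝ) : ℝ :=
  linInterp N f x - linInterp σ f x

/-- The open mesh interval `(i/N, (i+1)/N)`. -/
def meshCell (N i : ℕ) : Set ℝ :=
  Set.Ioo ((i : ℝ) / N) (((i : ℝ) + 1) / N)

/-- The open mesh square with indices `q`. -/
def meshSquare (N : ℕ) (q : ℕ × ℕ) : Set (ℝ × ℝ) :=
  meshCell N q.1 ×ˢ meshCell N q.2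

variable {N σ i k : ℕ} {x : ℝ}

theorem div_lt_succ_div (hN : 0 < N) (i : ℕ) : (i : ℝ) / N < ((i : ℝ) + 1) / N := by
  gcongr
  exact lt_add_one _

theorem succ_div_sub_div (N i : ℕ) : ((i : ℝ) + 1) / N - i / N = 1 / N := by
  ring

theorem succ_div_le_one (hi : i < N) : ((i : ℝ) + 1) / N ≤ 1 :=
  div_le_one_of_le₀ (by exact_mod_cast hi) (Nat.cast_nonneg N)

theorem mem_meshCell_iff (hN : 0 < N) : x ∈ meshCell N i ↔ (i : ℝ) < N * x ∧ N * x < i + 1 := by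
  have hN' : (0 : ℝ) < N := Nat.cast_pos.2 hN
  rw [meshCell, Set.mem_Ioo, div_lt_iff₀' hN', lt_div_iff₀' hN']

theorem hat_eq_max (hN : 0 < N) (i : ℕ) (x : ℝ) : hat N i x = max 0 (1 - |N * x - i|) := by
  have hN' : (0 : ℝ) < N := Nat.cast_pos.2 hN
  have hrise : (N : ℝ) * (x - ((i : ℝ) - 1) / N) = N * x - i + 1 := by field_simp; ring
  have hfall : (N : ℝ) * (((i : ℝ) + 1) / N - x) = 1 - (N * x - i) := by field_simp; ring
  simp only [hat, div_le_iff₀' hN', le_div_iff₀' hN', hrise, hfall]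
  split_ifs with h₁ h₂
  · rw [abs_of_nonpos (by linarith [h₁.2]), max_eq_right (by linarith [h₁.1])]
    ring
  · rw [abs_of_nonneg (by linarith [h₂.1]), max_eq_right (by linarith [h₂.2])]
  · refine (max_eq_left ?_).symm
    by_contra! h
    have habs := abs_lt.1 (show |N * x - i| < 1 by linarith)
    rcases le_total (N * x) i with hle | hle
    · exact h₁ ⟨by linarith, hle⟩
    · exact h₂ ⟨hle, by linarith⟩

theorem hat_self_of_mem_meshCell (hN : 0 < N) (hx : x ∈ meshCell N i) :
    hat N i x = i + 1 - N * x := by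
  obtain ⟨hlt, hgt⟩ := (mem_meshCell_iff hN).1 hx
  rw [hat_eq_max hN, abs_of_nonneg (by linarith), max_eq_right (by linarith)]
  ring

theorem hat_succ_of_mem_meshCell (hN : 0 < N) (hx : x ∈ meshCell N i) :
    hat N (i + 1) x = N * x - i := by
  obtain ⟨hlt, hgt⟩ := (mem_meshCell_iff hN).1 hx
  rw [hat_eq_max hN, Nat.cast_succ, abs_of_nonpos (by linarith), max_eq_right (by linarith)]
  ring

theorem hat_eq_zero_of_mem_meshCell (hN : 0 < N) (hx : x ∈ meshCell N i) {j : ℕ} (hj : j ≠ i)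
    (hj' : j ≠ i + 1) : hat N j x = 0 := by
  obtain ⟨hlt, hgt⟩ := (mem_meshCell_iff hN).1 hx
  rw [hat_eq_max hN]
  refine max_eq_left (sub_nonpos.2 (le_abs'.2 ?_))
  rcases hj.lt_or_gt with h | h
  · have hji : (j : ℝ) + 1 ≤ i := by exact_mod_cast h
    exact Or.inr (by linarith)
  · have hij : (i : ℝ) + 2 ≤ j := by exact_mod_cast (show i + 2 ≤ j by omega)
    exact Or.inl (by linarith)

theorem linInterp_eq_chordFunctional (hi : i < N) (hx : x ∈ meshCell N i) (f : ℝ → ℝ) :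
    linInterp N f x =
      linearCombination ℝ f (chordFunctional ((i : ℝ) / N) (((i : ℝ) + 1) / N) x) := by
  have hN : 0 < N := (Nat.zero_le i).trans_lt hi
  have hN' : (N : ℝ) ≠ 0 := Nat.cast_ne_zero.2 hN.ne'
  rw [linInterp, Finset.sum_eq_add_of_mem i (i + 1) (Finset.mem_range.2 (by omega))
    (Finset.mem_range.2 (by omega)) (by omega)
    fun j _ hj => by rw [hat_eq_zero_of_mem_meshCell hN hx hj.1 hj.2, mul_zero],
    hat_self_of_mem_meshCell hN hx, hat_succ_of_mem_meshCell hN hx,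
    linearCombination_chordFunctional, slope_def_field, succ_div_sub_div, Nat.cast_succ]
  field_simp
  ring

/-- The `i`-th interval of the mesh with `N` intervals lies in the `k`-th interval of the mesh with
`σ` intervals, both meshes being restricted to `[0, 1]`. -/
structure NestedCells (N σ i k : ℕ) : Prop where
  fine_lt : i < N
  coarse_lt : k < σ
  subset : meshCell N i ⊆ meshCell σ k

theorem exists_nestedCells (hdvd : σ ∣ N) (hi : i < N) : ∃ k, NestedCells N σ i k := by
  obtain ⟨m, rfl⟩ := hdvd
  have hσm : 0 < σ * m := (Nat.zero_le i).trans_lt hi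
  have hσ : 0 < σ := Nat.pos_of_mul_pos_right hσm
  have hm : 0 < m := Nat.pos_of_mul_pos_left hσm
  have hm' : (0 : ℝ) < m := Nat.cast_pos.2 hm
  have hle : ((i / m : ℕ) : ℝ) * m ≤ i := by exact_mod_cast Nat.div_mul_le_self i m
  have hlt : (i : ℝ) + 1 ≤ (((i / m : ℕ) : ℝ) + 1) * m := by
    exact_mod_cast Nat.lt_mul_of_div_lt (Nat.lt_succ_self (i / m)) hm
  refine ⟨i / m, hi, Nat.div_lt_of_lt_mul (by rwa [mul_comm]), fun x hx => ?_⟩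
  rw [mem_meshCell_iff hσm, Nat.cast_mul] at hx
  rw [mem_meshCell_iff hσ]
  constructor <;> refine lt_of_mul_lt_mul_right ?_ hm'.le <;> linarith

namespace NestedCells

theorem fine_pos (h : NestedCells N σ i k) : 0 < N := (Nat.zero_le i).trans_lt h.fine_lt

theorem coarse_pos (h : NestedCells N σ i k) : 0 < σ := (Nat.zero_le k).trans_lt h.coarse_lt

theorem endpoints_le (h : NestedCells N σ i k) :
    (k : ℝ) / σ ≤ (i : ℝ) / N ∧ ((i : ℝ) + 1) / N ≤ ((k : ℝ) + 1) / σ :=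
  (Set.Ioo_subset_Ioo_iff (div_lt_succ_div h.fine_pos i)).1 h.subset

end NestedCells

/-- The functional `f ↦ linInterpDiff N σ f x` for `x` in the `i`-th fine and the `k`-th coarse
interval. -/
def interpDiffFunctional (N σ i k : ℕ) (x : ℝ) : ℝ →₀ ℝ :=
  chordFunctional ((i : ℝ) / N) (((i : ℝ) + 1) / N) x -
    chordFunctional ((k : ℝ) / σ) (((k : ℝ) + 1) / σ) x

/-- The functional sending `f` to the derivative of `linInterpDiff N σ f` on the intersection of the
`i`-th fine and the `k`-th coarse interval. -/
def interpDiffSlopeFunctional (N σ i k : ℕ) : ℝ →₀ ℝ :=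
  slopeFunctional ((i : ℝ) / N) (((i : ℝ) + 1) / N) -
    slopeFunctional ((k : ℝ) / σ) (((k : ℝ) + 1) / σ)

namespace NestedCells

theorem linInterpDiff_eq (h : NestedCells N σ i k) (hx : x ∈ meshCell N i) (f : ℝ → ℝ) :
    linInterpDiff N σ f x = linearCombination ℝ f (interpDiffFunctional N σ i k x) := by
  rw [linInterpDiff, linInterp_eq_chordFunctional h.fine_lt hx,
    linInterp_eq_chordFunctional h.coarse_lt (h.subset hx), interpDiffFunctional, map_sub]

theorem hasDerivAt_linInterpDiff (h : NestedCells N σ i k) (hx : x ∈ meshCell N i) (f : ℝ → ℝ) :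
    HasDerivAt (linInterpDiff N σ f)
      (linearCombination ℝ f (interpDiffSlopeFunctional N σ i k)) x := by
  have hlocal : linInterpDiff N σ f =ᶠ[nhds x]
      fun z => linearCombination ℝ f (interpDiffFunctional N σ i k z) :=
    Filter.eventually_of_mem (isOpen_Ioo.mem_nhds hx) fun z hz => h.linInterpDiff_eq hz f
  refine HasDerivAt.congr_of_eventuallyEq ?_ hlocal
  simp only [interpDiffFunctional, interpDiffSlopeFunctional, map_sub]
  exact (hasDerivAt_linearCombination_chordFunctional f _ _ x).sub
    (hasDerivAt_linearCombination_chordFunctional f _ _ x)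

theorem peanoBound_interpDiffSlopeFunctional (h : NestedCells N σ i k) :
    PeanoBound ((k : ℝ) / σ) (((k : ℝ) + 1) / σ) 1 (interpDiffSlopeFunctional N σ i k) :=
  peanoBound_slopeFunctional_sub h.endpoints_le.1 (div_lt_succ_div h.fine_pos i) h.endpoints_le.2

theorem peanoBound_interpDiffFunctional (h : NestedCells N σ i k) (hx : x ∈ meshCell N i) :
    PeanoBound ((k : ℝ) / σ) (((k : ℝ) + 1) / σ) (1 / σ) (interpDiffFunctional N σ i k x) := by
  rw [← succ_div_sub_div]
  exact peanoBound_chordFunctional_sub h.endpoints_le.1 (div_lt_succ_div h.fine_pos i)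
    h.endpoints_le.2 (Set.Ioo_subset_Icc_self hx)

end NestedCells

theorem meshCell_subset_Ioo (hi : i < N) : meshCell N i ⊆ Set.Ioo 0 1 :=
  Set.Ioo_subset_Ioo (by positivity) (succ_div_le_one hi)

theorem meshSquare_subset_Omega2 {q : ℕ × ℕ} (hq : q ∈ range N ×ˢ range N) :
    meshSquare N q ⊆ Omega2 := by
  rw [Finset.mem_product, Finset.mem_range, Finset.mem_range] at hq
  exact Set.prod_mono (meshCell_subset_Ioo hq.1) (meshCell_subset_Ioo hq.2)

theorem measurableSet_meshSquare (N : ℕ) (q : ℕ × ℕ) : MeasurableSet (meshSquare N q) :=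
  measurableSet_Ioo.prod measurableSet_Ioo

theorem volume_real_meshSquare (hN : 0 < N) (q : ℕ × ℕ) :
    volume.real (meshSquare N q) = 1 / (N : ℝ) ^ 2 := by
  have hcell : ∀ i : ℕ, volume.real (meshCell N i) = 1 / N := fun i => by
    rw [meshCell, Real.volume_real_Ioo_of_le (div_lt_succ_div hN i).le, succ_div_sub_div]
  rw [meshSquare, Measure.volume_eq_prod, measureReal_prod_prod, hcell, hcell]
  ring

theorem pairwise_disjoint_meshCell (N : ℕ) : Pairwise (Function.onFun Disjoint (meshCell N)) := by
  have hmono : Monotone fun i : ℕ => (i : ℝ) / N := fun i j hij => by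
    dsimp only
    gcongr
  intro i j hij
  simpa only [Function.onFun, meshCell, Nat.succ_eq_succ, Nat.cast_succ] using
    hmono.pairwise_disjoint_on_Ioo_succ hij

theorem pairwise_disjoint_meshSquare (N : ℕ) :
    Pairwise (Function.onFun Disjoint (meshSquare N)) := fun q r hqr => by
  refine Set.disjoint_prod.2 ?_
  by_cases hfst : q.1 = r.1
  · exact Or.inr (pairwise_disjoint_meshCell N fun hsnd => hqr (Prod.ext hfst hsnd))
  · exact Or.inl (pairwise_disjoint_meshCell N hfst)

theorem ae_exists_mem_meshCell (hN : 0 < N) :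
    ∀ᵐ x : ℝ, x ∈ Set.Ioo (0 : ℝ) 1 → ∃ i < N, x ∈ meshCell N i := by
  have hN' : (0 : ℝ) < N := Nat.cast_pos.2 hN
  filter_upwards [(Set.countable_range fun i : ℕ => (i : ℝ) / N).ae_notMem volume] with x hx hx01
  have hnode : ((⌊N * x⌋₊ : ℕ) : ℝ) ≠ N * x := fun h =>
    hx ⟨⌊N * x⌋₊, by rw [div_eq_iff hN'.ne', h, mul_comm]⟩
  have hpos : 0 ≤ N * x := mul_nonneg hN'.le hx01.1.le
  refine ⟨⌊N * x⌋₊, (Nat.floor_lt hpos).2 (mul_lt_of_lt_one_right hN' hx01.2), ?_⟩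
  exact (mem_meshCell_iff hN).2 ⟨(Nat.floor_le hpos).lt_of_ne hnode, Nat.lt_floor_add_one _⟩

theorem ae_exists_mem_meshSquare (hN : 0 < N) :
    ∀ᵐ p ∂volume.restrict Omega2, ∃ q ∈ range N ×ˢ range N, p ∈ meshSquare N q := by
  filter_upwards [ae_restrict_of_ae
      (Measure.quasiMeasurePreserving_fst.ae (ae_exists_mem_meshCell hN)),
    ae_restrict_of_ae (Measure.quasiMeasurePreserving_snd.ae (ae_exists_mem_meshCell hN)),
    ae_restrict_mem (measurableSet_Ioo.prod measurableSet_Ioo)] with p hfst hsnd hp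
  obtain ⟨i, hi, hpi⟩ := hfst hp.1
  obtain ⟨j, hj, hpj⟩ := hsnd hp.2
  exact ⟨(i, j), Finset.mem_product.2 ⟨Finset.mem_range.2 hi, Finset.mem_range.2 hj⟩, hpi, hpj⟩

end Mesh

section TwoScaleError

/-- The difference between the two-scale and the full bilinear interpolant of `u`. -/
def twoScaleError (N σ : ℕ) (u : ℝ × ℝ → ℝ) (p : ℝ × ℝ) : ℝ :=
  twoScale N σ u p - interp N N u p

/-- The integrand `|∇v|² + v²` of the squared energy norm. -/
def energyDensity (v : ℝ × ℝ → ℝ) (p : ℝ × ℝ) : ℝ :=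
  pderivX v p ^ 2 + pderivY v p ^ 2 + v p ^ 2

variable {N σ i j k l : ℕ} {u : ℝ × ℝ → ℝ} {p : ℝ × ℝ}

theorem interp_eq_linInterp_linInterp (Nx Ny : ℕ) (u : ℝ × ℝ → ℝ) (p : ℝ × ℝ) :
    interp Nx Ny u p = linInterp Nx (fun s => linInterp Ny (fun t => u (s, t)) p.2) p.1 := by
  simp only [interp, linInterp, Finset.sum_mul]
  exact Finset.sum_congr rfl fun _ _ => Finset.sum_congr rfl fun _ _ => mul_right_comm _ _ _

theorem linInterp_sub (N : ℕ) (f g : ℝ → ℝ) (x : ℝ) :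
    linInterp N (fun s => f s - g s) x = linInterp N f x - linInterp N g x := by
  simp only [linInterp, sub_mul, Finset.sum_sub_distrib]

theorem twoScaleError_eq_neg_linInterpDiff (N σ : ℕ) (u : ℝ × ℝ → ℝ) (p : ℝ × ℝ) :
    twoScaleError N σ u p =
      -linInterpDiff N σ (fun s => linInterpDiff N σ (fun t => u (s, t)) p.2) p.1 := by
  simp only [twoScaleError, twoScale, interp_eq_linInterp_linInterp, linInterpDiff, linInterp_sub]
  ring

theorem twoScaleError_eq_neg_tensorPairing (hx : NestedCells N σ i k) (hy : NestedCells N σ j l)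
    (hp : p ∈ meshSquare N (i, j)) :
    twoScaleError N σ u p = -tensorPairing u (interpDiffFunctional N σ i k p.1)
      (interpDiffFunctional N σ j l p.2) := by
  simp only [twoScaleError_eq_neg_linInterpDiff, hx.linInterpDiff_eq hp.1,
    hy.linInterpDiff_eq hp.2, tensorPairing]

theorem pderivX_twoScaleError (hx : NestedCells N σ i k) (hy : NestedCells N σ j l)
    (hp : p ∈ meshSquare N (i, j)) :
    pderivX (twoScaleError N σ u) p = -tensorPairing u (interpDiffSlopeFunctional N σ i k)
      (interpDiffFunctional N σ j l p.2) := by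
  simp only [pderivX, twoScaleError_eq_neg_linInterpDiff, hy.linInterpDiff_eq hp.2]
  exact (hx.hasDerivAt_linInterpDiff hp.1 _).fun_neg.deriv

theorem pderivY_twoScaleError (hx : NestedCells N σ i k) (hy : NestedCells N σ j l)
    (hp : p ∈ meshSquare N (i, j)) :
    pderivY (twoScaleError N σ u) p = -tensorPairing u (interpDiffFunctional N σ i k p.1)
      (interpDiffSlopeFunctional N σ j l) := by
  simp only [pderivY, twoScaleError_eq_neg_linInterpDiff, hx.linInterpDiff_eq hp.1]
  exact (hasDerivAt_linearCombination fun _ _ =>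
    hy.hasDerivAt_linInterpDiff hp.2 _).fun_neg.deriv

theorem sq_tensorPairing_le_setIntegral_meshSquare (hk : k < σ) (hl : l < σ)
    (hu : ∀ p ∈ unitSquare, ContDiffAt ℝ 4 u p) {A B : ℝ} {Λ M : ℝ →₀ ℝ}
    (hΛ : PeanoBound ((k : ℝ) / σ) (((k : ℝ) + 1) / σ) A Λ)
    (hM : PeanoBound ((l : ℝ) / σ) (((l : ℝ) + 1) / σ) B M) (hA : 0 ≤ A) (hB : 0 ≤ B)
    (hAB : A * B ≤ 1 / σ) :
    tensorPairing u Λ M ^ 2 ≤ 1 / (σ : ℝ) ^ 4 * ∫ q in meshSquare σ (k, l), uxxyy u q ^ 2 := by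
  have hσ : 0 < σ := (Nat.zero_le k).trans_lt hk
  have hcell : Set.Icc ((k : ℝ) / σ) (((k : ℝ) + 1) / σ) ×ˢ
      Set.Icc ((l : ℝ) / σ) (((l : ℝ) + 1) / σ) ⊆ unitSquare :=
    Set.prod_mono (Set.Icc_subset_Icc (by positivity) (succ_div_le_one hk))
      (Set.Icc_subset_Icc (by positivity) (succ_div_le_one hl))
  have hI : 0 ≤ ∫ q in meshSquare σ (k, l), uxxyy u q ^ 2 := integral_nonneg fun _ => sq_nonneg _
  calc tensorPairing u Λ M ^ 2
      ≤ (A * B) ^ 2 * ((1 / σ : ℝ) * (1 / σ) * ∫ q in meshSquare σ (k, l), uxxyy u q ^ 2) := by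
        simpa only [succ_div_sub_div, meshSquare, meshCell] using hΛ.sq_tensorPairing_le hM hB
          (div_lt_succ_div hσ k).le (div_lt_succ_div hσ l).le fun q hq => hu q (hcell hq)
    _ ≤ (1 / σ : ℝ) ^ 2 * ((1 / σ : ℝ) * (1 / σ) *
        ∫ q in meshSquare σ (k, l), uxxyy u q ^ 2) :=
        mul_le_mul_of_nonneg_right (pow_le_pow_left₀ (mul_nonneg hA hB) hAB 2)
          (mul_nonneg (by positivity) hI)
    _ = 1 / (σ : ℝ) ^ 4 * ∫ q in meshSquare σ (k, l), uxxyy u q ^ 2 := by ring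

theorem energyDensity_twoScaleError_le (hx : NestedCells N σ i k) (hy : NestedCells N σ j l)
    (hp : p ∈ meshSquare N (i, j)) (hu : ∀ p ∈ unitSquare, ContDiffAt ℝ 4 u p) :
    energyDensity (twoScaleError N σ u) p ≤
      3 / (σ : ℝ) ^ 4 * ∫ q in meshSquare σ (k, l), uxxyy u q ^ 2 := by
  have hσ_nonneg : (0 : ℝ) ≤ 1 / σ := by positivity
  have hσ_le_one : 1 / (σ : ℝ) ≤ 1 :=
    div_le_one_of_le₀ (by exact_mod_cast hx.coarse_pos) (Nat.cast_nonneg σ)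
  have hX := sq_tensorPairing_le_setIntegral_meshSquare hx.coarse_lt hy.coarse_lt hu
    hx.peanoBound_interpDiffSlopeFunctional (hy.peanoBound_interpDiffFunctional hp.2)
    zero_le_one hσ_nonneg (one_mul _).le
  have hY := sq_tensorPairing_le_setIntegral_meshSquare hx.coarse_lt hy.coarse_lt hu
    (hx.peanoBound_interpDiffFunctional hp.1) hy.peanoBound_interpDiffSlopeFunctional
    hσ_nonneg zero_le_one (mul_one _).le
  have hvalue := sq_tensorPairing_le_setIntegral_meshSquare hx.coarse_lt hy.coarse_lt hu
    (hx.peanoBound_interpDiffFunctional hp.1) (hy.peanoBound_interpDiffFunctional hp.2)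
    hσ_nonneg hσ_nonneg (mul_le_of_le_one_right hσ_nonneg hσ_le_one)
  simp only [energyDensity, twoScaleError_eq_neg_tensorPairing hx hy hp,
    pderivX_twoScaleError hx hy hp, pderivY_twoScaleError hx hy hp, neg_sq]
  calc _ ≤ 1 / (σ : ℝ) ^ 4 * (∫ q in meshSquare σ (k, l), uxxyy u q ^ 2) +
        1 / (σ : ℝ) ^ 4 * (∫ q in meshSquare σ (k, l), uxxyy u q ^ 2) +
        1 / (σ : ℝ) ^ 4 * ∫ q in meshSquare σ (k, l), uxxyy u q ^ 2 :=
        add_le_add (add_le_add hX hY) hvalue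
    _ = 3 / (σ : ℝ) ^ 4 * ∫ q in meshSquare σ (k, l), uxxyy u q ^ 2 := by ring

theorem ae_energyDensity_twoScaleError_le (hN : 0 < N) (hdvd : σ ∣ N)
    (hu : ∀ p ∈ unitSquare, ContDiffAt ℝ 4 u p) :
    ∀ᵐ p ∂volume.restrict Omega2, ∃ r ∈ range σ ×ˢ range σ, p ∈ meshSquare σ r ∧
      energyDensity (twoScaleError N σ u) p ≤
        3 / (σ : ℝ) ^ 4 * ∫ q in meshSquare σ r, uxxyy u q ^ 2 := by
  refine (ae_exists_mem_meshSquare hN).mono ?_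
  rintro p ⟨⟨i, j⟩, hij, hp⟩
  rw [Finset.mem_product, Finset.mem_range, Finset.mem_range] at hij
  obtain ⟨k, hx⟩ := exists_nestedCells hdvd hij.1
  obtain ⟨l, hy⟩ := exists_nestedCells hdvd hij.2
  exact ⟨(k, l),
    Finset.mem_product.2 ⟨Finset.mem_range.2 hx.coarse_lt, Finset.mem_range.2 hy.coarse_lt⟩,
    ⟨hx.subset hp.1, hy.subset hp.2⟩, energyDensity_twoScaleError_le hx hy hp hu⟩

theorem volume_real_restrict_Omega2_meshSquare (hN : 0 < N) {q : ℕ × ℕ}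
    (hq : q ∈ range N ×ˢ range N) :
    (volume.restrict Omega2).real (meshSquare N q) = 1 / (N : ℝ) ^ 2 := by
  rw [measureReal_restrict_apply (measurableSet_meshSquare N q),
    Set.inter_eq_self_of_subset_left (meshSquare_subset_Omega2 hq), volume_real_meshSquare hN]

theorem setIntegral_energyDensity_twoScaleError_le (hN : 0 < N) (hdvd : σ ∣ N)
    (hu : ∀ p ∈ unitSquare, ContDiffAt ℝ 4 u p) :
    ∫ p in Omega2, energyDensity (twoScaleError N σ u) p ≤
      3 / (σ : ℝ) ^ 6 * ∫ p in Omega2, uxxyy u p ^ 2 := by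
  have hσ : 0 < σ := Nat.pos_of_dvd_of_pos hdvd hN
  have hint : IntegrableOn (fun p => uxxyy u p ^ 2) Omega2 :=
    integrableOn_Ioo_prod_of_continuousOn fun p hp =>
      ((continuousAt_uxxyy (hu p hp)).pow 2).continuousWithinAt
  have hΩ : volume Omega2 ≠ ⊤ :=
    ((Metric.isBounded_Ioo 0 1).prod (Metric.isBounded_Ioo 0 1)).measure_lt_top.ne
  have : IsFiniteMeasure (volume.restrict Omega2) := isFiniteMeasure_restrict.2 hΩ
  calc ∫ p in Omega2, energyDensity (twoScaleError N σ u) p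
      ≤ ∑ r ∈ range σ ×ˢ range σ, 3 / (σ : ℝ) ^ 4 * (∫ q in meshSquare σ r, uxxyy u q ^ 2) *
          (volume.restrict Omega2).real (meshSquare σ r) :=
        integral_le_sum_mul_measureReal (fun r _ => measurableSet_meshSquare σ r)
          (fun _ _ => measure_ne_top _ _)
          (fun _ _ => mul_nonneg (by positivity) (integral_nonneg fun _ => sq_nonneg _))
          (ae_energyDensity_twoScaleError_le hN hdvd hu)
    _ = 3 / (σ : ℝ) ^ 6 * ∑ r ∈ range σ ×ˢ range σ, ∫ q in meshSquare σ r, uxxyy u q ^ 2 := by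
        rw [Finset.mul_sum]
        refine Finset.sum_congr rfl fun r hr => ?_
        rw [volume_real_restrict_Omega2_meshSquare hσ hr]
        ring
    _ ≤ 3 / (σ : ℝ) ^ 6 * ∫ p in Omega2, uxxyy u p ^ 2 := by
        gcongr
        exact sum_setIntegral_le_setIntegral (fun r _ => measurableSet_meshSquare σ r)
          ((pairwise_disjoint_meshSquare σ).set_pairwise _) (fun _ => meshSquare_subset_Omega2)
          hint (Filter.Eventually.of_forall fun _ => sq_nonneg _)

end TwoScaleError

theorem C4Near.contDiffAt {u : ℝ × ℝ → ℝ} (hu : C4Near u) {p : ℝ × ℝ} (hp : p ∈ unitSquare) :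
    ContDiffAt ℝ 4 u p := by
  obtain ⟨U, hU, hsub, huU⟩ := hu
  exact huU.contDiffAt (hU.mem_nhds (hsub hp))

theorem two_scale_vs_full_interpolant_energy_bound_general {N σ : ℕ} (hN : 0 < N) (hdvd : σ ∣ N)
    {u : ℝ × ℝ → ℝ} (hu : C4Near u) :
    energyNorm (fun p => twoScale N σ u p - interp N N u p) ≤
      √3 / (σ : ℝ) ^ 3 * L2norm (uxxyy u) := by
  calc energyNorm (fun p => twoScale N σ u p - interp N N u p)
      = √(∫ p in Omega2, energyDensity (twoScaleError N σ u) p) := rfl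
    _ ≤ √(3 / (σ : ℝ) ^ 6 * ∫ p in Omega2, uxxyy u p ^ 2) :=
        Real.sqrt_le_sqrt <|
          setIntegral_energyDensity_twoScaleError_le hN hdvd fun _ => hu.contDiffAt
    _ = √3 / (σ : ℝ) ^ 3 * L2norm (uxxyy u) := by
        rw [Real.sqrt_mul (by positivity), Real.sqrt_div (by norm_num),
          show (σ : ℝ) ^ 6 = (σ ^ 3) ^ 2 by ring, Real.sqrt_sq (by positivity), L2norm]

/-- Energy-norm bound for the difference between the two-scale interpolant and the full
bilinear interpolant: `|||Î_{N,N}u − I_{N,N}u||| ≤ C σ⁻³ ‖∂⁴u/∂x²∂y²‖_{0,Ω}`. -/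
theorem two_scale_vs_full_interpolant_energy_bound :
    ∃ C : ℝ, 0 < C ∧ ∀ (N σ : ℕ), 0 < N → 0 < σ → σ ∣ N →
      ∀ u : ℝ × ℝ → ℝ, C4Near u → VanishOnBoundary u →
        energyNorm (fun p => twoScale N σ u p - interp N N u p) ≤
          C / (σ : ℝ) ^ 3 * L2norm (uxxyy u) :=
  ⟨√3, by positivity, fun _ _ hN _ hdvd _ hu _ =>
    two_scale_vs_full_interpolant_energy_bound_general hN hdvd hu⟩
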